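/- Let F be a field, let A₀ be an m×m matrix over F whose first row is the zero vector, let A₁ be an invertible k×k matrix over F, and let B be a k×m matrix over F all of whose columns except possibly the first are zero. Then there exists a k×m matrix X over F with B = X·A₀ − A₁·X; consequently the (m+k)×(m+k) block lower triangular matrix with diagonal blocks A₀, A₁ and lower-left block B is similar to Dg[A₀, A₁]. -/

import Mathlib

/-!
The product `B * A₀` pairs each column of `B` with the corresponding row of `A₀`, and one of the two
is always zero, so `B * A₀ = 0`. Hence `X = -(A₁⁻¹ * B)` satisfies `X * A₀ = 0` and `A₁ * X = -B`.
A solution `X` of the Sylvester equation gives the block matrix `[1, 0; X, 1]`, and conjugating by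
it removes the block `B`.
-/

section

variable {R l m n : Type*}

theorem matrix_mul_eq_zero_of_col_of_row [NonUnitalNonAssocSemiring R] [Fintype m]
    {B : Matrix l m R} {A : Matrix m n R} (i₀ : m)
    (hB : ∀ i j, j ≠ i₀ → B i j = 0) (hA : ∀ j, A i₀ j = 0) : B * A = 0 := by
  ext i j
  calc (B * A) i j = ∑ x, B i x * A x j := Matrix.mul_apply
    _ = B i i₀ * A i₀ j :=
      Fintype.sum_eq_single i₀ fun x hx => by rw [hB i x hx, zero_mul]
    _ = 0 := by rw [hA, mul_zero]

theorem eq_sylvester_neg_mul_of_mul_eq_zero [Ring R] [Fintype m] [Fintype n] [DecidableEq n]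
    {A₀ : Matrix m m R} {A₁ C : Matrix n n R} {B : Matrix n m R}
    (hC : A₁ * C = 1) (hBA : B * A₀ = 0) : B = -(C * B) * A₀ - A₁ * -(C * B) := by
  have hXA : -(C * B) * A₀ = 0 := by
    rw [Matrix.neg_mul, Matrix.mul_assoc, hBA, Matrix.mul_zero, neg_zero]
  have hAX : A₁ * -(C * B) = -B := by
    rw [Matrix.mul_neg, ← Matrix.mul_assoc, hC, Matrix.one_mul]
  rw [hXA, hAX, zero_sub, neg_neg]

variable [Fintype m] [Fintype n] [DecidableEq m] [DecidableEq n]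

/-- The block lower unitriangular matrix `[1, 0; X, 1]`, as a unit of the matrix ring; conjugation
by it changes the lower-left block of a block lower triangular matrix. -/
def lowerUnitriangular [Ring R] (X : Matrix n m R) : (Matrix (m ⊕ n) (m ⊕ n) R)ˣ where
  val := Matrix.fromBlocks 1 0 X 1
  inv := Matrix.fromBlocks 1 0 (-X) 1
  val_inv := by simp [Matrix.fromBlocks_multiply]
  inv_val := by simp [Matrix.fromBlocks_multiply]

theorem isConj_fromBlocks_of_sylvester [Ring R] {A₀ : Matrix m m R} {A₁ : Matrix n n R}
    {B X : Matrix n m R} (h : B = X * A₀ - A₁ * X) :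
    IsConj (Matrix.fromBlocks A₀ 0 B A₁) (Matrix.fromBlocks A₀ 0 0 A₁) := by
  have hconj : Matrix.fromBlocks 1 0 X 1 * Matrix.fromBlocks A₀ 0 0 A₁ =
      Matrix.fromBlocks A₀ 0 B A₁ * Matrix.fromBlocks 1 0 X 1 := by
    simp [Matrix.fromBlocks_multiply, h]
  exact IsConj.symm ⟨lowerUnitriangular X, hconj⟩

theorem isConj_reindex [Semiring R] (e : m ≃ n) {A B : Matrix m m R} (h : IsConj A B) :
    IsConj (Matrix.reindex e e A) (Matrix.reindex e e B) :=
  (Matrix.reindexRingEquiv R e : Matrix m m R →* Matrix n n R).map_isConj h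

theorem exists_isUnit_inv_mul_mul_eq_of_isConj [CommRing R] {A B : Matrix n n R}
    (h : IsConj A B) : ∃ S : Matrix n n R, IsUnit S ∧ S⁻¹ * A * S = B := by
  obtain ⟨S, hS⟩ := h.symm
  refine ⟨S, S.isUnit, ?_⟩
  rw [← Matrix.coe_units_inv, Matrix.mul_assoc, ← hS.eq, Units.inv_mul_cancel_left]

theorem sylvester_solution_first_column_general [Ring R] {A₀ : Matrix m m R} (i₀ : m)
    (hA₀ : ∀ j, A₀ i₀ j = 0) {A₁ C : Matrix n n R} (hC : A₁ * C = 1) {B : Matrix n m R}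
    (hB : ∀ i j, j ≠ i₀ → B i j = 0) :
    (∃ X : Matrix n m R, B = X * A₀ - A₁ * X) ∧
      IsConj (Matrix.fromBlocks A₀ 0 B A₁) (Matrix.fromBlocks A₀ 0 0 A₁) := by
  have hBA : B * A₀ = 0 := matrix_mul_eq_zero_of_col_of_row i₀ hB hA₀
  have hX : B = -(C * B) * A₀ - A₁ * -(C * B) := eq_sylvester_neg_mul_of_mul_eq_zero hC hBA
  exact ⟨⟨_, hX⟩, isConj_fromBlocks_of_sylvester hX⟩

end

/-- Let `A₀` be an `m × m` matrix whose first row is zero, `A₁` an invertible `k × k`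
matrix, and `B` a `k × m` matrix all of whose columns except possibly the first are
zero. Then the Sylvester equation `B = X * A₀ - A₁ * X` has a solution `X`;
consequently the block lower triangular matrix with diagonal blocks `A₀`, `A₁` and
lower-left block `B` is similar to `Dg[A₀, A₁]`. -/
theorem sylvester_solution_first_column
    (F : Type*) [Field F] (m k : ℕ) (hm : 0 < m)
    (A₀ : Matrix (Fin m) (Fin m) F) (hA₀ : ∀ j, A₀ ⟨0, hm⟩ j = 0)
    (A₁ : Matrix (Fin k) (Fin k) F) (hA₁ : IsUnit A₁)
    (B : Matrix (Fin k) (Fin m) F) (hB : ∀ (i : Fin k) (j : Fin m), (j : ℕ) ≠ 0 → B i j = 0) :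
    (∃ X : Matrix (Fin k) (Fin m) F, B = X * A₀ - A₁ * X) ∧
      ∃ S : Matrix (Fin (m + k)) (Fin (m + k)) F,
        IsUnit S ∧
        S⁻¹ * Matrix.reindex finSumFinEquiv finSumFinEquiv
              (Matrix.fromBlocks A₀ 0 B A₁) * S =
          Matrix.reindex finSumFinEquiv finSumFinEquiv
            (Matrix.fromBlocks A₀ 0 0 A₁) := by
  obtain ⟨C, hC⟩ := hA₁.exists_right_inv
  obtain ⟨hX, hconj⟩ := sylvester_solution_first_column_general ⟨0, hm⟩ hA₀ hC
    fun i j hj => hB i j fun h => hj (Fin.ext h)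
  exact ⟨hX, exists_isUnit_inv_mul_mul_eq_of_isConj (isConj_reindex finSumFinEquiv hconj)⟩
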